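/- arXiv:2212.09279 — 3 statements merged into one kernel-verified Lean document; each statement's English description precedes it below -/
import Mathlib

section
/- Let 𝓕 be a finite nonempty union-closed family of finite sets with ∅ ∉ 𝓕, let k be the size of a smallest set of 𝓕 and n the size of the largest set of 𝓕, and let f be the number of abundant elements for 𝓕. If k ≥ n − 3, then f ≥ k. -/
/-- A family of finite sets (of naturals) is union-closed. -/
def UnionClosed (F : Finset (Finset ℕ)) : Prop :=
  ∀ A ∈ F, ∀ B ∈ F, A ∪ B ∈ F

/-- An element `x` is abundant for `F` if it belongs to more than half of the sets of `F`. -/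
def Abundant (F : Finset (Finset ℕ)) (x : ℕ) : Prop :=
  2 * (F.filter (fun A => x ∈ A)).card > F.card

instance (F : Finset (Finset ℕ)) : DecidablePred (Abundant F) := fun x =>
  inferInstanceAs (Decidable (2 * (F.filter (fun A => x ∈ A)).card > F.card))

/-- `F` is twin-free: for every two distinct elements of the union of all its sets,
some set of `F` contains exactly one of them. -/
def TwinFree (F : Finset (Finset ℕ)) : Prop :=
  ∀ a ∈ F.sup id, ∀ b ∈ F.sup id, a ≠ b → ∃ A ∈ F, (A ∩ {a, b}).card = 1

/-- `F` is an `(f,k,n)`-construction: it is a nonempty union-closed family with exactly `f`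
abundant elements, a smallest set of size `k`, and the largest set (the union) of size `n`. -/
def IsConstruction (F : Finset (Finset ℕ)) (f k n : ℕ) : Prop :=
  F.Nonempty ∧ UnionClosed F ∧
  ((F.sup id).filter (Abundant F)).card = f ∧
  (∃ S ∈ F, S.card = k) ∧ (∀ A ∈ F, k ≤ A.card) ∧
  (F.sup id).card = n

/-!
Pass to the complements in the largest set `U`. They form a family `G` that is closed under
intersection, contains `∅`, and has all members of size at most `m = n - k ≤ 3`; a point of `U` is
not abundant exactly when it lies in at least half of the members of `G`. We must exclude a set `R`
of `m + 1` such points. Let `cⱼ` be the number of `A ∈ G` with `#(R ∩ A) = j`, and let `t` be the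
number of `q ∈ R` with `R \ {q} ∈ G`. A member meeting `R` in `m` points lies inside `R`, so
`cₘ ≤ t`, and counting incidences between `R` and `G` in two ways gives
`(m + 1) c₀ + (m - 1) c₁ ≤ (m - 1) t`, where `c₀ ≥ 1`. If `t = m + 1`, then intersections produce
every singleton of `R`, so that `c₁ ≥ m + 1`, and the inequality fails; it also fails for `t ≤ m`
unless `m = 3`.

For `m = 3` the inequality is `2 c₀ + c₁ ≤ t ≤ 3`. Choose `p ∈ R` with `R \ {p} ∉ G`. Intersecting
with the sets `R \ {q} ∈ G` shows that every member which misses `p` misses all of `R`. Hence `p`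
lies in more than half of the members, the inequality is strict, and `t = 3`, `c₁ = 0`. But `t = 3`
forces `{p} ∈ G`, so `c₁ ≥ 1`.
-/

open Finset

section InfClosed

variable {α : Type*} [DecidableEq α] {G : Finset (Finset α)} {R A : Finset α} {m : ℕ} {p x : α}

/-- The number of members of `G` that meet `R` in exactly `j` points. -/
def traceCount (G : Finset (Finset α)) (R : Finset α) (j : ℕ) : ℕ :=
  #{A ∈ G | #(R ∩ A) = j}

/-- The points of `R` whose removal from `R` leaves a member of `G`; they index the members of `G`
that are maximal proper subsets of `R`. -/
def removable (G : Finset (Finset α)) (R : Finset α) : Finset α :=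
  {q ∈ R | R.erase q ∈ G}

theorem mem_removable {q : α} : q ∈ removable G R ↔ q ∈ R ∧ R.erase q ∈ G := mem_filter

theorem removable_subset (G : Finset (Finset α)) (R : Finset α) : removable G R ⊆ R :=
  filter_subset _ _

theorem removable_subset_erase (hpr : p ∉ removable G R) : removable G R ⊆ R.erase p :=
  subset_erase.2 ⟨removable_subset G R, hpr⟩

theorem card_removable_lt (hp : p ∈ R) (hpr : p ∉ removable G R) : #(removable G R) < #R :=
  card_lt_card ⟨removable_subset G R, fun h => hpr (h hp)⟩

theorem traceCount_pos (hA : A ∈ G) : 0 < traceCount G R #(R ∩ A) :=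
  card_pos.2 ⟨A, mem_filter.2 ⟨hA, rfl⟩⟩

theorem traceCount_zero_pos (hempty : ∅ ∈ G) : 0 < traceCount G R 0 := by
  simpa using traceCount_pos (R := R) hempty

theorem traceCount_add_traceCount_le_card {i j : ℕ} (hij : i ≠ j) :
    traceCount G R i + traceCount G R j ≤ #G := by
  unfold traceCount
  rw [← card_union_of_disjoint (disjoint_filter.2 fun A _ hi hj => hij (hi.symm.trans hj))]
  exact card_le_card (union_subset (filter_subset _ _) (filter_subset _ _))

theorem card_le_traceCount_one (hsingle : ∀ x ∈ R, {x} ∈ G) :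
    #R ≤ traceCount G R 1 := by
  refine card_le_card_of_injOn ({·}) (fun x hx => ?_) singleton_injective.injOn
  have hxR : R ∩ {x} = {x} := inter_singleton_of_mem hx
  simp [hsingle x hx, hxR]

theorem traceCount_le_card_removable (hsize : ∀ A ∈ G, #A ≤ m) (hR : #R = m + 1) :
    traceCount G R m ≤ #(removable G R) := by
  refine (card_le_card fun A hA => ?_).trans (card_image_le (f := R.erase))
  obtain ⟨hAG, hcard⟩ := mem_filter.1 hA
  have hAR : A ⊆ R :=
    inter_eq_right.1 (eq_of_subset_of_card_le inter_subset_right (hcard ▸ hsize A hAG))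
  have hAm : #A = m := by rwa [inter_eq_right.2 hAR] at hcard
  obtain ⟨q, hqA, rfl⟩ := exists_eq_insert_iff.2 ⟨hAR, by omega⟩
  have herase : (insert q A).erase q = A := erase_insert hqA
  exact mem_image.2 ⟨q, mem_removable.2 ⟨mem_insert_self q A, herase.symm ▸ hAG⟩, herase⟩

theorem mem_of_sdiff_subset_removable (hG : InfClosed (G : Set (Finset α))) {S : Finset α}
    (hSR : S ⊂ R) (hS : R \ S ⊆ removable G R) : S ∈ G := by
  have hne : (R \ S).Nonempty := sdiff_nonempty.2 hSR.2
  have hinf : (R \ S).inf' hne R.erase ∈ G :=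
    hG.finsetInf'_mem hne fun q hq => (mem_removable.1 (hS hq)).2
  convert hinf using 1
  refine le_antisymm (le_inf' _ _ fun q hq => ?_) fun y hy => ?_
  · exact subset_erase.2 ⟨hSR.1, (mem_sdiff.1 hq).2⟩
  · have hmem : ∀ q ∈ R \ S, y ∈ R.erase q := fun q hq => inf'_le R.erase hq hy
    obtain ⟨q, hq⟩ := hne
    by_contra hyS
    exact notMem_erase y R (hmem y (mem_sdiff.2 ⟨mem_of_mem_erase (hmem q hq), hyS⟩))

theorem singleton_mem_of_erase_subset_removable (hG : InfClosed (G : Set (Finset α)))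
    (hone : 1 < #R) (hx : x ∈ R) (hxr : R.erase x ⊆ removable G R) : {x} ∈ G :=
  mem_of_sdiff_subset_removable hG
    (ssubset_of_subset_of_ne (singleton_subset_iff.2 hx)
      (ne_of_apply_ne card (by rw [card_singleton]; exact hone.ne)))
    (by rwa [sdiff_singleton_eq_erase])

theorem singleton_mem_of_card_le_card_removable (hG : InfClosed (G : Set (Finset α)))
    (hone : 1 < #R) (hp : p ∈ R) (hpr : p ∉ removable G R)
    (hcard : #R ≤ #(removable G R) + 1) : {p} ∈ G := by
  refine singleton_mem_of_erase_subset_removable hG hone hp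
    (eq_of_subset_of_card_le (removable_subset_erase hpr) ?_).ge
  rw [card_erase_of_mem hp]
  exact Nat.sub_le_of_le_add hcard

theorem sum_card_inter_eq_sum_card_filter_mem (G : Finset (Finset α)) (R : Finset α) :
    ∑ A ∈ G, #(R ∩ A) = ∑ x ∈ R, #{A ∈ G | x ∈ A} := by
  simpa only [bipartiteAbove, bipartiteBelow, filter_mem_eq_inter] using
    (sum_card_bipartiteAbove_eq_sum_card_bipartiteBelow (s := R) (t := G) (· ∈ ·)).symm

theorem card_inter_le_of_card_le (R : Finset α) (hsize : ∀ A ∈ G, #A ≤ m) :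
    ∀ A ∈ G, #(R ∩ A) ≤ m :=
  fun A hA => (card_le_card inter_subset_right).trans (hsize A hA)

theorem two_mul_sum_card_filter_mem_add_le (hm : m ≤ 3) (hinter : ∀ A ∈ G, #(R ∩ A) ≤ m) :
    2 * ∑ x ∈ R, #{A ∈ G | x ∈ A} + ((m + 1) * traceCount G R 0 + (m - 1) * traceCount G R 1) ≤
      #G * (m + 1) + (m - 1) * traceCount G R m := by
  rw [← sum_card_inter_eq_sum_card_filter_mem]
  simp only [traceCount, card_filter, mul_sum, ← sum_add_distrib, ← smul_eq_mul #G,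
    ← sum_const]
  refine sum_le_sum fun A hA => ?_
  -- When `#(R ∩ A) = j` with `2 ≤ j < m`, the claim is `2 * j ≤ m + 1`: this needs `m ≤ 3`.
  have hj := hinter A hA
  generalize #(R ∩ A) = j at hj ⊢
  interval_cases m <;> interval_cases j <;> simp

theorem weighted_traceCount_le (hm : m ≤ 3) (hinter : ∀ A ∈ G, #(R ∩ A) ≤ m)
    (hR : #R = m + 1) (hfreq : ∀ x ∈ R, #G ≤ 2 * #{A ∈ G | x ∈ A}) :
    (m + 1) * traceCount G R 0 + (m - 1) * traceCount G R 1 ≤ (m - 1) * traceCount G R m := by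
  have hincidence := two_mul_sum_card_filter_mem_add_le hm hinter
  have hsum : #G * (m + 1) ≤ 2 * ∑ x ∈ R, #{A ∈ G | x ∈ A} := by
    rw [mul_sum, mul_comm, ← hR, ← smul_eq_mul]
    exact card_nsmul_le_sum _ _ _ hfreq
  omega

theorem weighted_traceCount_lt (hm : m ≤ 3) (hinter : ∀ A ∈ G, #(R ∩ A) ≤ m)
    (hR : #R = m + 1) (hfreq : ∀ x ∈ R, #G ≤ 2 * #{A ∈ G | x ∈ A}) (hp : p ∈ R)
    (hlt : #G < 2 * #{A ∈ G | p ∈ A}) :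
    (m + 1) * traceCount G R 0 + (m - 1) * traceCount G R 1 < (m - 1) * traceCount G R m := by
  have hincidence := two_mul_sum_card_filter_mem_add_le hm hinter
  have hsum : #G * (m + 1) < 2 * ∑ x ∈ R, #{A ∈ G | x ∈ A} := by
    rw [mul_sum, mul_comm, ← hR, ← smul_eq_mul, ← sum_const]
    exact sum_lt_sum hfreq ⟨p, hp, hlt⟩
  omega

theorem exists_notMem_removable (hm : m ≤ 3) (hG : InfClosed (G : Set (Finset α)))
    (hempty : ∅ ∈ G) (hsize : ∀ A ∈ G, #A ≤ m) (hR : #R = m + 1)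
    (hfreq : ∀ x ∈ R, #G ≤ 2 * #{A ∈ G | x ∈ A}) : ∃ p ∈ R, p ∉ removable G R := by
  by_contra! hall
  have hcount := weighted_traceCount_le hm (card_inter_le_of_card_le R hsize) hR hfreq
  have hzero := traceCount_zero_pos (R := R) hempty
  have htop := (traceCount_le_card_removable hsize hR).trans (card_le_card (removable_subset G R))
  obtain hm_le | hm_gt := le_or_gt m 1
  · rw [Nat.sub_eq_zero_of_le hm_le] at hcount
    nlinarith
  · have hsingle : ∀ x ∈ R, {x} ∈ G := fun x hx =>
      singleton_mem_of_erase_subset_removable hG (by omega) hx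
        fun q hq => hall q (mem_of_mem_erase hq)
    have hone := card_le_traceCount_one hsingle
    have htop_le_one := Nat.mul_le_mul_left (m - 1) (htop.trans hone)
    nlinarith

theorem card_inter_ne_one_of_notMem (hG : InfClosed (G : Set (Finset α))) (hone : 1 < #R)
    (hcount : #R + traceCount G R 1 ≤ #(removable G R) + 2) (hp : p ∈ R)
    (hpr : p ∉ removable G R) (hA : A ∈ G) (hpA : p ∉ A) : #(R ∩ A) ≠ 1 := by
  intro hAone
  have hlt := card_removable_lt hp hpr
  have hpos : 0 < traceCount G R 1 := hAone ▸ traceCount_pos hA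
  have hpG : {p} ∈ G :=
    singleton_mem_of_card_le_card_removable hG hone hp hpr (by omega)
  have hpone : #(R ∩ {p}) = 1 := by rw [inter_singleton_of_mem hp, card_singleton]
  have htwo : 1 < traceCount G R 1 :=
    one_lt_card.2 ⟨A, mem_filter.2 ⟨hA, hAone⟩, {p}, mem_filter.2 ⟨hpG, hpone⟩,
      fun h => hpA (h ▸ mem_singleton_self p)⟩
  omega

theorem card_inter_eq_zero_of_notMem (hG : InfClosed (G : Set (Finset α)))
    (hsize : ∀ A ∈ G, #A ≤ 3) (hR : #R = 4)
    (hcount : #R + traceCount G R 1 ≤ #(removable G R) + 2) (hp : p ∈ R)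
    (hpr : p ∉ removable G R) (hA : A ∈ G) (hpA : p ∉ A) : #(R ∩ A) = 0 := by
  have hle : #(R ∩ A) ≤ 3 := card_inter_le_of_card_le R hsize A hA
  have hsub : R ∩ A ⊆ R.erase p := fun x hx =>
    mem_erase.2 ⟨fun h => hpA (h ▸ mem_of_mem_inter_right hx), mem_of_mem_inter_left hx⟩
  have herase : #(R.erase p) = 3 := by rw [card_erase_of_mem hp, hR]
  have hne_one := card_inter_ne_one_of_notMem hG (by omega) hcount hp hpr hA hpA
  have hne_two : #(R ∩ A) ≠ 2 := by
    intro htwo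
    obtain ⟨q, hq⟩ : ((R ∩ A) ∩ removable G R).Nonempty :=
      inter_nonempty_of_card_lt_card_add_card hsub (removable_subset_erase hpr) (by omega)
    obtain ⟨hqA, hqr⟩ := mem_inter.1 hq
    have hmem : R.erase q ∩ A ∈ G := hG (mem_removable.1 hqr).2 hA
    refine card_inter_ne_one_of_notMem hG (by omega) hcount hp hpr hmem
      (fun h => hpA (mem_of_mem_inter_right h)) ?_
    rw [← inter_assoc, inter_eq_right.2 (erase_subset q R), erase_inter,
      card_erase_of_mem hqA, htwo]
  have hne_three : #(R ∩ A) ≠ 3 := by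
    intro hthree
    have hRA : R ∩ A = R.erase p := eq_of_subset_of_card_le hsub (by omega)
    have hAeq : R ∩ A = A :=
      eq_of_subset_of_card_le inter_subset_right (hthree ▸ hsize A hA)
    exact hpr (mem_removable.2 ⟨hp, hRA ▸ hAeq.symm ▸ hA⟩)
  omega

theorem exists_two_mul_card_filter_mem_lt_of_card_eq_four
    (hG : InfClosed (G : Set (Finset α))) (hempty : ∅ ∈ G) (hsize : ∀ A ∈ G, #A ≤ 3)
    (hR : #R = 4) : ∃ x ∈ R, 2 * #{A ∈ G | x ∈ A} < #G := by
  by_contra! hfreq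
  obtain ⟨p, hp, hpr⟩ := exists_notMem_removable le_rfl hG hempty hsize hR hfreq
  have hweak := weighted_traceCount_le le_rfl (card_inter_le_of_card_le R hsize) hR hfreq
  have hzero := traceCount_zero_pos (R := R) hempty
  have htop := traceCount_le_card_removable hsize hR
  have hlt := card_removable_lt hp hpr
  have hmiss : #{A ∈ G | p ∉ A} ≤ traceCount G R 0 := card_le_card fun A hA =>
    have ⟨hAG, hpA⟩ := mem_filter.1 hA
    mem_filter.2 ⟨hAG,
      card_inter_eq_zero_of_notMem hG hsize hR (by omega) hp hpr hAG hpA⟩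
  have hmajority : #G < 2 * #{A ∈ G | p ∈ A} := by
    have hsplit := card_filter_add_card_filter_not (s := G) (p ∈ ·)
    have hlower := traceCount_add_traceCount_le_card (G := G) (R := R) (i := 0) (j := 3)
      (by decide)
    omega
  have hstrict := weighted_traceCount_lt le_rfl (card_inter_le_of_card_le R hsize) hR hfreq hp
    hmajority
  have hpG : {p} ∈ G :=
    singleton_mem_of_card_le_card_removable hG (by omega) hp hpr (by omega)
  have hone : 0 < traceCount G R 1 := by
    simpa [inter_singleton_of_mem hp] using traceCount_pos (R := R) hpG
  omega

theorem exists_two_mul_card_filter_mem_lt (hm : m ≤ 3) (hG : InfClosed (G : Set (Finset α)))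
    (hempty : ∅ ∈ G) (hsize : ∀ A ∈ G, #A ≤ m) (hR : #R = m + 1) :
    ∃ x ∈ R, 2 * #{A ∈ G | x ∈ A} < #G := by
  obtain rfl | hlt := hm.eq_or_lt
  · exact exists_two_mul_card_filter_mem_lt_of_card_eq_four hG hempty hsize hR
  by_contra! hfreq
  obtain ⟨p, hp, hpr⟩ := exists_notMem_removable hm hG hempty hsize hR hfreq
  have hcount := weighted_traceCount_le hm (card_inter_le_of_card_le R hsize) hR hfreq
  have hzero := traceCount_zero_pos (R := R) hempty
  have htop := traceCount_le_card_removable hsize hR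
  have hrem := card_removable_lt hp hpr
  interval_cases m <;> omega

theorem card_le_of_forall_card_le_two_mul (hm : m ≤ 3) (hG : InfClosed (G : Set (Finset α)))
    (hempty : ∅ ∈ G) (hsize : ∀ A ∈ G, #A ≤ m)
    (hfreq : ∀ x ∈ R, #G ≤ 2 * #{A ∈ G | x ∈ A}) : #R ≤ m := by
  by_contra! hlt
  obtain ⟨S, hSR, hS⟩ := exists_subset_card_eq (Nat.succ_le_of_lt hlt)
  obtain ⟨x, hx, hxlt⟩ := exists_two_mul_card_filter_mem_lt hm hG hempty hsize hS
  exact hxlt.not_ge (hfreq x (hSR hx))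

end InfClosed

section SupClosed

variable {α : Type*} [DecidableEq α] {F : Finset (Finset α)}

/-- The family of complements of the members of `F`, taken inside their union. -/
def complementFamily (F : Finset (Finset α)) : Finset (Finset α) :=
  F.image (F.sup id \ ·)

theorem subset_sup_id {A : Finset α} (hA : A ∈ F) : A ⊆ F.sup id := le_sup (f := id) hA

theorem injOn_sup_id_sdiff (F : Finset (Finset α)) :
    Set.InjOn (F.sup id \ ·) (F : Set (Finset α)) := fun A hA B hB hAB => by
  rw [← Finset.sdiff_sdiff_eq_self (subset_sup_id hA),
    ← Finset.sdiff_sdiff_eq_self (subset_sup_id hB)]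
  exact congrArg (F.sup id \ ·) hAB

theorem card_complementFamily (F : Finset (Finset α)) : #(complementFamily F) = #F :=
  card_image_of_injOn (injOn_sup_id_sdiff F)

theorem card_filter_mem_complementFamily {x : α} (hx : x ∈ F.sup id) :
    #{B ∈ complementFamily F | x ∈ B} = #{A ∈ F | x ∉ A} := by
  rw [complementFamily, filter_image,
    card_image_of_injOn ((injOn_sup_id_sdiff F).mono (coe_subset.2 (filter_subset _ _)))]
  simp only [mem_sdiff, hx, true_and]

theorem infClosed_complementFamily (hF : SupClosed (F : Set (Finset α))) :
    InfClosed (complementFamily F : Set (Finset α)) := by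
  intro B hB C hC
  obtain ⟨A, hA, rfl⟩ := mem_image.1 hB
  obtain ⟨A', hA', rfl⟩ := mem_image.1 hC
  exact mem_image.2 ⟨A ∪ A', hF hA hA', sdiff_union_distrib _ _ _⟩

theorem empty_mem_complementFamily (hne : F.Nonempty) (hF : SupClosed (F : Set (Finset α))) :
    ∅ ∈ complementFamily F :=
  mem_image.2 ⟨F.sup id, sup'_eq_sup hne id ▸ hF.finsetSup'_mem hne fun _ hA => hA,
    Finset.sdiff_self _⟩

theorem card_le_of_mem_complementFamily {k : ℕ} (hk : ∀ A ∈ F, k ≤ #A) :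
    ∀ B ∈ complementFamily F, #B ≤ #(F.sup id) - k := by
  refine forall_mem_image.2 fun A hA => ?_
  rw [card_sdiff_of_subset (subset_sup_id hA)]
  exact Nat.sub_le_sub_left (hk A hA) _

theorem abundance_k_ge_n_sub_3_general (hne : F.Nonempty) (hF : SupClosed (F : Set (Finset α)))
    {k : ℕ} (hk : ∀ A ∈ F, k ≤ #A) (hkn : #(F.sup id) ≤ k + 3) :
    k ≤ #{x ∈ F.sup id | #F < 2 * #{A ∈ F | x ∈ A}} := by
  have hscarce : #{x ∈ F.sup id | ¬ #F < 2 * #{A ∈ F | x ∈ A}} ≤ #(F.sup id) - k := by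
    refine card_le_of_forall_card_le_two_mul (by omega) (infClosed_complementFamily hF)
      (empty_mem_complementFamily hne hF) (card_le_of_mem_complementFamily hk) fun x hx => ?_
    obtain ⟨hxU, hx⟩ := mem_filter.1 hx
    rw [card_complementFamily, card_filter_mem_complementFamily hxU]
    have hsplit := card_filter_add_card_filter_not (s := F) (x ∈ ·)
    omega
  have hkU : k ≤ #(F.sup id) :=
    have ⟨A, hA⟩ := hne
    (hk A hA).trans (card_le_card (subset_sup_id hA))
  have hsplit := card_filter_add_card_filter_not (s := F.sup id)
    fun x => #F < 2 * #{A ∈ F | x ∈ A}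
  omega

end SupClosed

theorem abundance_k_ge_n_sub_3 (F : Finset (Finset ℕ)) (hF : F.Nonempty)
    (hUC : UnionClosed F) (hE : (∅ : Finset ℕ) ∉ F) (k n f : ℕ)
    (hk₁ : ∃ S ∈ F, S.card = k) (hk₂ : ∀ A ∈ F, k ≤ A.card)
    (hn : (F.sup id).card = n)
    (hf : ((F.sup id).filter (Abundant F)).card = f)
    (hkn : k ≥ n - 3) :
    f ≥ k := by
  subst hn hf
  exact abundance_k_ge_n_sub_3_general hF (fun A hA B hB => hUC A hA B hB) hk₂ (by omega)
end

section
/- For all integers k ≥ 0 and n such that k is even and n ≥ max { 3, 5k − 8 }, there exists a (2,k,n)-construction, i.e. a finite union-closed family of finite sets with exactly 2 abundant elements, whose smallest set has size k and whose largest set has size n. -/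
/-!
For `k = 2 * m + 2` with `m ≥ 1`, take twelve points in two groups, each with a leader and five
followers, and the family of all sets of at least four points that contain the leader of every group
they meet. Giving weight `1` to the leaders, weight `m` to the followers and any surplus to a single
follower, a lightest set has weight `2 * m + 2` (both leaders and two followers), and the total can
be any `n ≥ 10 * m + 2 = 5 * k - 8`. Replacing each point by as many copies as its weight turns this
into the required family.

A leader is abundant, because it can be added to any set. A follower is not: removing it is
injective from the sets containing it to those that avoid it but contain its leader, and fails only
for the four-point sets. There are 15 of these containing the follower, fewer than the 16 sets that
avoid its leader, which are formed by the other leader and at least three of its five followers.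
-/

open Finset

section BlowUp

variable {α β : Type*} {w : α → ℕ} (g : (Σ a, Fin (w a)) ↪ β)

/-- The blow-up of a set `A` of points, in which each `a ∈ A` is replaced by `w a` copies; the
embedding `g` names the copies by elements of `β`. -/
def blowUp (A : Finset α) : Finset β :=
  (A.sigma fun _ => univ).map g

theorem apply_mem_blowUp {A : Finset α} {p : Σ a, Fin (w a)} : g p ∈ blowUp g A ↔ p.1 ∈ A := by
  simp [blowUp]

theorem card_blowUp (A : Finset α) : #(blowUp g A) = ∑ a ∈ A, w a := by
  simp [blowUp]

theorem blowUp_mono : Monotone (blowUp g) := fun _ _ h =>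
  map_subset_map.2 (sigma_mono h fun _ => Subset.rfl)

theorem blowUp_union [DecidableEq α] [DecidableEq β] (A B : Finset α) :
    blowUp g (A ∪ B) = blowUp g A ∪ blowUp g B := by
  rw [blowUp, blowUp, blowUp, ← map_union]
  congr 1
  ext p
  simp

theorem blowUp_injective (hw : ∀ a, 0 < w a) : Function.Injective (blowUp g) := by
  intro A B h
  ext a
  rw [← apply_mem_blowUp g (p := ⟨a, 0, hw a⟩), h, apply_mem_blowUp]

theorem filter_blowUp_univ [Fintype α] (P : β → Prop) [DecidablePred P] (Q : α → Prop)
    [DecidablePred Q] (h : ∀ p, P (g p) ↔ Q p.1) :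
    (blowUp g univ).filter P = blowUp g (univ.filter Q) := by
  rw [blowUp, blowUp, filter_map]
  congr 1
  ext p
  simp [h]

theorem abundant_map_blowUp_iff [DecidableEq α] {g : (Σ a, Fin (w a)) ↪ ℕ} {G : Finset (Finset α)}
    (hg : Function.Injective (blowUp g)) (p : Σ a, Fin (w a)) :
    Abundant (G.map ⟨blowUp g, hg⟩) (g p) ↔ #G < 2 * #{A ∈ G | p.1 ∈ A} := by
  simp only [Abundant, filter_map, card_map, gt_iff_lt, Function.comp_def,
    Function.Embedding.coeFn_mk, apply_mem_blowUp]

theorem exists_isConstruction_of_weight [Fintype α] [DecidableEq α] {G : Finset (Finset α)} {k : ℕ}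
    (hG : SupClosed (G : Set (Finset α))) (htop : univ ∈ G) (hw : ∀ a, 0 < w a)
    (hmin : ∃ A ∈ G, ∑ a ∈ A, w a = k) (hk : ∀ A ∈ G, k ≤ ∑ a ∈ A, w a) :
    ∃ F, IsConstruction F (∑ a with #G < 2 * #{A ∈ G | a ∈ A}, w a) k (∑ a, w a) := by
  obtain ⟨g⟩ := nonempty_embedding_nat (Σ a, Fin (w a))
  have hg := blowUp_injective g hw
  have hsup : (G.map ⟨blowUp g, hg⟩).sup id = blowUp g univ := by
    rw [sup_map]
    exact le_antisymm (Finset.sup_le fun A _ => blowUp_mono g (subset_univ A))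
      (le_sup (f := blowUp g) htop)
  refine ⟨G.map ⟨blowUp g, hg⟩, map_nonempty.2 ⟨_, htop⟩, ?_, ?_, ?_, ?_, ?_⟩
  · simp only [UnionClosed, forall_mem_map, Function.Embedding.coeFn_mk, ← blowUp_union]
    exact fun A hA B hB => mem_map_of_mem ⟨blowUp g, hg⟩ (hG hA hB)
  · rw [hsup, filter_blowUp_univ g _ (fun a => #G < 2 * #{A ∈ G | a ∈ A})
      (abundant_map_blowUp_iff hg), card_blowUp]
  · obtain ⟨A, hA, hAk⟩ := hmin
    exact ⟨blowUp g A, mem_map_of_mem _ hA, (card_blowUp g A).trans hAk⟩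
  · simpa only [forall_mem_map, Function.Embedding.coeFn_mk, card_blowUp] using hk
  · rw [hsup, card_blowUp]

end BlowUp

theorem exists_isConstruction_zero {f n : ℕ} (hf : 0 < f) (hfn : f < n) :
    ∃ F, IsConstruction F f 0 n := by
  let G : Finset (Finset Bool) := {∅, {true}, univ}
  have habundant : ∀ b, #G < 2 * #{A ∈ G | b ∈ A} ↔ b = true := by decide
  have h := exists_isConstruction_of_weight (G := G) (k := 0)
    (w := fun b => bif b then f else n - f) (by simp [G, SupClosed, pair_comm]) (by simp [G])
    (by simp [hf, hfn]) (by simp [G]) (by simp)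
  simp only [habundant, filter_eq', mem_univ, if_true, sum_singleton] at h
  simpa [hfn.le] using h

theorem exists_isConstruction_self {f n : ℕ} (hf : 0 < f) (hfn : f < n) :
    ∃ F, IsConstruction F f f n := by
  let G : Finset (Finset Bool) := {{true}, univ}
  have habundant : ∀ b, #G < 2 * #{A ∈ G | b ∈ A} ↔ b = true := by decide
  have h := exists_isConstruction_of_weight (G := G) (k := f)
    (w := fun b => bif b then f else n - f) (by simp [G, SupClosed, pair_comm]) (by simp [G])
    (by simp [hf, hfn]) (by simp [G]) (by simp [G])
  simp only [habundant, filter_eq', mem_univ, if_true, sum_singleton] at h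
  simpa [hfn.le] using h

section LeaderFamily

variable (ι κ : Type*) [Fintype ι] [DecidableEq ι] [Fintype κ] [DecidableEq κ] (r : ℕ)

/-- The points are divided into groups indexed by `ι`; the group `i` consists of its leader
`(i, none)` and of the followers `(i, some j)`. The leader family consists of the sets of at least
`r` points that contain the leader of each group they meet. -/
def leaderFamily : Finset (Finset (ι × Option κ)) :=
  {A | r ≤ #A ∧ ∀ p ∈ A, (p.1, none) ∈ A}

variable {ι κ r}

theorem mem_leaderFamily {A : Finset (ι × Option κ)} :
    A ∈ leaderFamily ι κ r ↔ r ≤ #A ∧ ∀ p ∈ A, (p.1, none) ∈ A := by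
  simp only [leaderFamily, mem_filter_univ]

theorem supClosed_leaderFamily :
    SupClosed (leaderFamily ι κ r : Set (Finset (ι × Option κ))) := by
  intro A hA B hB
  rw [mem_coe, mem_leaderFamily] at *
  refine ⟨hA.1.trans (card_le_card subset_union_left), fun p hp => ?_⟩
  rw [sup_eq_union, mem_union] at *
  exact hp.imp (hA.2 p) (hB.2 p)

theorem univ_mem_leaderFamily (hr : r ≤ Fintype.card (ι × Option κ)) :
    univ ∈ leaderFamily ι κ r :=
  mem_leaderFamily.2 ⟨hr, fun _ _ => mem_univ _⟩

theorem insert_leader_mem_leaderFamily {A : Finset (ι × Option κ)} (hA : A ∈ leaderFamily ι κ r)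
    (i : ι) : insert (i, none) A ∈ leaderFamily ι κ r := by
  rw [mem_leaderFamily] at *
  refine ⟨hA.1.trans (card_le_card (subset_insert _ _)), fun p hp => ?_⟩
  rcases mem_insert.1 hp with rfl | hp
  · exact mem_insert_self _ _
  · exact mem_insert_of_mem (hA.2 p hp)

theorem erase_follower_mem_leaderFamily {A : Finset (ι × Option κ)}
    (hA : A ∈ leaderFamily ι κ r) (hr : r < #A) (i : ι) (j : κ) :
    A.erase (i, some j) ∈ leaderFamily ι κ r := by
  rw [mem_leaderFamily] at *
  refine ⟨(Nat.le_sub_one_of_lt hr).trans pred_card_le_card_erase, fun p hp => ?_⟩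
  exact mem_erase.2 ⟨by simp, hA.2 p (mem_of_mem_erase hp)⟩

theorem card_leaderFamily_lt_two_mul_card_filter_leader_mem [Nonempty κ]
    (hr : r ≤ Fintype.card (ι × Option κ)) (i : ι) :
    #(leaderFamily ι κ r) < 2 * #{A ∈ leaderFamily ι κ r | (i, none) ∈ A} := by
  obtain ⟨j⟩ := ‹Nonempty κ›
  -- Adding the leader is injective, and never yields a set containing a follower from its group.
  have hinj : Set.InjOn (insert (i, none))
      ({A ∈ leaderFamily ι κ r | (i, none) ∉ A} : Set (Finset (ι × Option κ))) := by
    intro A hA B hB h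
    rw [← erase_insert hA.2, h, erase_insert hB.2]
  suffices h : #{A ∈ leaderFamily ι κ r | (i, none) ∉ A} <
      #{A ∈ leaderFamily ι κ r | (i, none) ∈ A} by
    have := card_filter_add_card_filter_not (s := leaderFamily ι κ r) ((i, none) ∈ ·)
    omega
  rw [← card_image_of_injOn (by simpa using hinj)]
  refine card_lt_card (ssubset_iff_of_subset ?_ |>.2 ⟨univ, ?_, ?_⟩)
  · refine image_subset_iff.2 fun A hA => mem_filter.2 ⟨?_, mem_insert_self _ _⟩
    exact insert_leader_mem_leaderFamily (mem_filter.1 hA).1 i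
  · exact mem_filter.2 ⟨univ_mem_leaderFamily hr, mem_univ _⟩
  · intro h
    obtain ⟨A, hA, hAu⟩ := mem_image.1 h
    rw [mem_filter, mem_leaderFamily] at hA
    have hj : (i, some j) ∈ insert (i, none) A := hAu ▸ mem_univ _
    exact hA.2 (hA.1.2 (i, some j) (by simpa using hj))

theorem card_filter_follower_mem_add_le (i : ι) (j : κ) :
    #{A ∈ leaderFamily ι κ r | (i, some j) ∈ A} + #{A ∈ leaderFamily ι κ r | (i, none) ∉ A} ≤
      #{A ∈ leaderFamily ι κ r | (i, some j) ∉ A} +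
        #{A ∈ leaderFamily ι κ r | (i, some j) ∈ A ∧ #A = r} := by
  -- Removing the follower keeps a set in the family unless the set has exactly `r` points.
  have herase : #{A ∈ leaderFamily ι κ r | (i, some j) ∈ A ∧ #A ≠ r} ≤
      #{A ∈ leaderFamily ι κ r | (i, some j) ∉ A ∧ (i, none) ∈ A} := by
    refine card_le_card_of_injOn (erase · (i, some j)) (fun A hA => ?_) fun A hA B hB h => ?_
    · obtain ⟨hA, hj, hr⟩ := mem_filter.1 hA
      obtain ⟨hrA, hlead⟩ := mem_leaderFamily.1 hA
      exact mem_filter.2 ⟨erase_follower_mem_leaderFamily hA (hrA.lt_of_ne' hr) i j,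
        notMem_erase _ _, mem_erase.2 ⟨by simp, hlead _ hj⟩⟩
    · rw [← insert_erase (mem_filter.1 hA).2.1, ← insert_erase (mem_filter.1 hB).2.1]
      exact congrArg (insert _) h
  have hnone : {A ∈ leaderFamily ι κ r | (i, some j) ∉ A ∧ (i, none) ∉ A} =
      {A ∈ leaderFamily ι κ r | (i, none) ∉ A} :=
    filter_congr fun A hA =>
      and_iff_right_of_imp fun h hj => h ((mem_leaderFamily.1 hA).2 _ hj)
  have hmem := card_filter_add_card_filter_not
    (s := {A ∈ leaderFamily ι κ r | (i, some j) ∈ A}) (#· = r)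
  have hnotMem := card_filter_add_card_filter_not
    (s := {A ∈ leaderFamily ι κ r | (i, some j) ∉ A}) ((i, none) ∈ ·)
  simp only [filter_filter, hnone, ← ne_eq] at hmem hnotMem
  omega

theorem card_filter_le_card_add_one_le_card_filter_leader_notMem [Nontrivial ι] (i : ι) :
    #{T : Finset κ | r ≤ #T + 1} ≤ #{A ∈ leaderFamily ι κ r | (i, none) ∉ A} := by
  obtain ⟨i', hi⟩ := exists_ne i
  refine card_le_card_of_injOn (fun T => {i'} ×ˢ insertNone T) (fun T hT => ?_) fun T _ T' _ h => ?_
  · rw [mem_coe, mem_filter_univ] at hT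
    simpa [mem_leaderFamily, card_insertNone, hT] using hi
  · ext j
    simpa using congrArg ((i', some j) ∈ ·) h

theorem leader_follower_subset {A : Finset (ι × Option κ)} (hA : A ∈ leaderFamily ι κ r)
    {i : ι} {j : κ} (hj : (i, some j) ∈ A) : {(i, none), (i, some j)} ⊆ A :=
  insert_subset ((mem_leaderFamily.1 hA).2 _ hj) (singleton_subset_iff.2 hj)

theorem sdiff_leader_follower_mem {A : Finset (Bool × Option κ)} (hA : A ∈ leaderFamily Bool κ 4)
    {b : Bool} {j : κ} (hj : (b, some j) ∈ A) (hcard : #A = 4) :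
    A \ {(b, none), (b, some j)} ∈
      powersetCard 2 (insert (!b, none) ((univ.erase j).image fun i => (b, some i))) ∪
        univ.image fun i => {(!b, none), (!b, some i)} := by
  have hpair : #(A \ {(b, none), (b, some j)}) = 2 := by
    rw [card_sdiff_of_subset (leader_follower_subset hA hj), hcard, card_pair (by simp)]
  by_cases hother : ∃ i, (!b, some i) ∈ A
  · obtain ⟨i, hi⟩ := hother
    refine mem_union_right _ (mem_image.2 ⟨i, mem_univ _, eq_of_subset_of_card_le ?_ ?_⟩)
    · exact subset_sdiff.2 ⟨leader_follower_subset hA hi, by simp⟩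
    · rw [hpair, card_pair (by simp)]
  · refine mem_union_left _ (mem_powersetCard.2 ⟨?_, hpair⟩)
    rintro ⟨b', o⟩ hp
    obtain ⟨hpA, hp⟩ := mem_sdiff.1 hp
    obtain rfl | hb := eq_or_ne b' b
    · cases o <;> simp_all
    · obtain rfl := Bool.eq_not_of_ne hb
      cases o with
      | none => exact mem_insert_self _ _
      | some i => exact (hother ⟨i, hpA⟩).elim

theorem card_filter_follower_mem_card_eq_four_le (b : Bool) (j : κ) :
    #{A ∈ leaderFamily Bool κ 4 | (b, some j) ∈ A ∧ #A = 4} ≤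
      (Fintype.card κ).choose 2 + Fintype.card κ := by
  have hcard : #(insert (!b, none) ((univ.erase j).image fun i => (b, some i))) ≤
      Fintype.card κ := calc
    _ ≤ #((univ.erase j).image fun i => (b, some i)) + 1 := card_insert_le _ _
    _ ≤ #(univ.erase j) + 1 := Nat.add_le_add_right card_image_le 1
    _ = Fintype.card κ := card_erase_add_one (mem_univ j)
  calc
    _ ≤ #(powersetCard 2 (insert (!b, none) ((univ.erase j).image fun i => (b, some i))) ∪
          univ.image fun i => {(!b, none), (!b, some i)}) := by
      refine card_le_card_of_injOn (· \ {(b, none), (b, some j)}) (fun A hA => ?_)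
        fun A hA B hB h => ?_
      · obtain ⟨hA, hj, hcard⟩ := mem_filter.1 hA
        exact sdiff_leader_follower_mem hA hj hcard
      · obtain ⟨hA, hjA, -⟩ := mem_filter.1 hA
        obtain ⟨hB, hjB, -⟩ := mem_filter.1 hB
        rw [← sdiff_union_of_subset (leader_follower_subset hA hjA),
          ← sdiff_union_of_subset (leader_follower_subset hB hjB)]
        exact congrArg (· ∪ _) h
    _ ≤ (Fintype.card κ).choose 2 + Fintype.card κ := by
      refine (card_union_le _ _).trans (add_le_add ?_ card_image_le)
      rw [card_powersetCard]
      exact Nat.choose_le_choose 2 hcard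

theorem two_mul_card_filter_follower_mem_lt (b : Bool) (i : Fin 5) :
    2 * #{A ∈ leaderFamily Bool (Fin 5) 4 | (b, some i) ∈ A} < #(leaderFamily Bool (Fin 5) 4) := by
  have hadd := card_filter_follower_mem_add_le (r := 4) b i
  have hfour := card_filter_follower_mem_card_eq_four_le b i
  have hnone := card_filter_le_card_add_one_le_card_filter_leader_notMem (κ := Fin 5) (r := 4) b
  have hchoose : (Fintype.card (Fin 5)).choose 2 + Fintype.card (Fin 5) = 15 := by decide
  have hlarge : #{T : Finset (Fin 5) | 4 ≤ #T + 1} = 16 := by decide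
  have hsum := card_filter_add_card_filter_not (s := leaderFamily Bool (Fin 5) 4) ((b, some i) ∈ ·)
  omega

theorem card_leaderFamily_lt_two_mul_card_filter_mem_iff (p : Bool × Option (Fin 5)) :
    #(leaderFamily Bool (Fin 5) 4) < 2 * #{A ∈ leaderFamily Bool (Fin 5) 4 | p ∈ A} ↔
      p.2 = none := by
  obtain ⟨b, _ | i⟩ := p
  · simpa using card_leaderFamily_lt_two_mul_card_filter_leader_mem (by decide) b
  · simpa using (two_mul_card_filter_follower_mem_lt b i).le

end LeaderFamily

theorem card_add_mul_le_sum_of_card_add_le_card {ι κ : Type*} [Fintype ι]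
    {w : ι × Option κ → ℕ} {m q : ℕ} (hm : 1 ≤ m)
    (hleader : ∀ i, 1 ≤ w (i, none)) (hfollower : ∀ i j, m ≤ w (i, some j))
    {A : Finset (ι × Option κ)} (hA : Fintype.card ι + q ≤ #A) :
    Fintype.card ι + q * m ≤ ∑ p ∈ A, w p := by
  have hcard : #{p ∈ A | p.2 = none} ≤ Fintype.card ι :=
    card_le_card_of_injOn Prod.fst (fun _ _ => mem_univ _) fun p hp p' hp' h => by grind
  have hsplit := card_filter_add_card_filter_not (s := A) (·.2 = none)
  have hleaders : #{p ∈ A | p.2 = none} * 1 ≤ ∑ p ∈ A with p.2 = none, w p := by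
    refine card_nsmul_le_sum _ w _ ?_
    rintro ⟨i, _ | j⟩ hp
    · exact hleader i
    · simp at hp
  have hfollowers : #{p ∈ A | p.2 ≠ none} * m ≤ ∑ p ∈ A with p.2 ≠ none, w p := by
    refine card_nsmul_le_sum _ w _ ?_
    rintro ⟨i, _ | j⟩ hp
    · simp at hp
    · exact hfollower i j
  rw [← sum_filter_add_sum_filter_not A (·.2 = none)]
  nlinarith

theorem exists_isConstruction_two_mul_add_two {m n : ℕ} (hm : 1 ≤ m) (hn : 10 * m + 2 ≤ n) :
    ∃ F, IsConstruction F 2 (2 * m + 2) n := by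
  set w : Bool × Option (Fin 5) → ℕ := fun p =>
    p.2.elim 1 (fun _ => m) + Pi.single (M := fun _ => ℕ) (true, some 0) (n - (10 * m + 2)) p
  have hleader (b) : w (b, none) = 1 := by simp [w]
  have hfalse (i) : w (false, some i) = m := by simp [w]
  have hfollower (b i) : m ≤ w (b, some i) := by simp [w]
  have hpos : ∀ p, 0 < w p := by
    rintro ⟨b, _ | i⟩
    · simp [hleader]
    · exact hm.trans (hfollower b i)
  have htotal : ∑ p, w p = n := by
    have hbase : ∑ p : Bool × Option (Fin 5), p.2.elim 1 (fun _ => m) = 10 * m + 2 := by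
      simp only [Fintype.sum_prod_type, Fintype.sum_option, Option.elim_none, Option.elim_some,
        sum_const, card_univ, Fintype.card_fin, Fintype.card_bool, smul_eq_mul]
      ring
    rw [sum_add_distrib, sum_pi_single', if_pos (mem_univ _), hbase, Nat.add_sub_cancel' hn]
  have hlight : ∑ p ∈ {(false, none), (true, none), (false, some 0), (false, some 1)}, w p =
      2 * m + 2 := by
    rw [sum_insert (by decide), sum_insert (by decide), sum_pair (by decide), hleader, hleader,
      hfalse, hfalse]
    ring
  have habundant : ∑ p with p.2 = none, w p = 2 := by
    rw [show ({p | p.2 = none} : Finset (Bool × Option (Fin 5))) = {(false, none), (true, none)} by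
      decide]
    simp [hleader]
  have hheavy : ∀ A ∈ leaderFamily Bool (Fin 5) 4, 2 * m + 2 ≤ ∑ p ∈ A, w p := fun A hA => by
    have := card_add_mul_le_sum_of_card_add_le_card (q := 2) hm (fun b => (hleader b).ge) hfollower
      (mem_leaderFamily.1 hA).1
    rwa [Fintype.card_bool, add_comm] at this
  have h := exists_isConstruction_of_weight supClosed_leaderFamily
    (univ_mem_leaderFamily (by decide)) hpos ⟨_, by simp [mem_leaderFamily], hlight⟩ hheavy
  simpa only [card_leaderFamily_lt_two_mul_card_filter_mem_iff, habundant, htotal] using h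

theorem exists_2kn_construction_even (k n : ℕ) (hke : Even k)
    (hn : n ≥ max 3 (5 * k - 8)) :
    ∃ F : Finset (Finset ℕ), IsConstruction F 2 k n := by
  obtain ⟨h3, h5⟩ := max_le_iff.1 hn
  obtain ⟨j, rfl⟩ := hke
  obtain _ | _ | j := j
  · exact exists_isConstruction_zero two_pos h3
  · exact exists_isConstruction_self two_pos h3
  · rw [← two_mul, mul_add_one]
    exact exists_isConstruction_two_mul_add_two (by omega) (by omega)
end

section
/- For all integers k and n with n − 4 ≥ k ≥ 3 and n ≥ 9, there exists a (k−1, k, n)-construction, i.e. a finite union-closed family of finite sets with exactly k − 1 abundant elements, whose smallest set has size k and whose largest set has size n. -/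
/-!
Split the ground set into a core `C` of `k - 1` elements and a set `T` of `n - k + 1` further
elements, and start from all sets `C ∪ X` with `∅ ≠ X ⊆ T`. The sets containing a given `t ∈ T`
outnumber those avoiding it by exactly one. To remove this surplus, add sets `(C \ {c}) ∪ X`, with
`X` from a union-closed family `L c` of subsets of `T`: a union of two sets over different parts of
`C` contains all of `C`, so the family stays union-closed. If each `t` lies in fewer than half of
all the tails `X` added, no element of `T` remains abundant; if all these tails have at least two
elements, the minimum size is still `k`, and every `c ∈ C` stays abundant because adding `c` to a
set never leaves the family, whereas removing it from a set `C ∪ {t}` does. Such systems of tails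
exist for `2`, `3` and `4` punctured elements, over `7`, `6` and `5` elements of `T` respectively,
which covers `k = 3`, `k = 4` and `k ≥ 5`.
-/

open Finset

/-- The family of all sets `K i ∪ X` with `X ∈ L i`: the `i`-th layer consists of the tails `L i`
on top of the base `K i`. -/
def layeredFamily {κ α : Type*} [Fintype κ] [DecidableEq α] (K : κ → Finset α)
    (L : κ → Finset (Finset α)) : Finset (Finset α) :=
  univ.biUnion fun i => (L i).image (K i ∪ ·)

section LayeredFamily

variable {κ α : Type*} [Fintype κ] [DecidableEq α]

theorem mem_layeredFamily {K : κ → Finset α} {L : κ → Finset (Finset α)} {A : Finset α} :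
    A ∈ layeredFamily K L ↔ ∃ i, ∃ X ∈ L i, K i ∪ X = A := by
  simp [layeredFamily]

theorem card_filter_layeredFamily {K : κ → Finset α} {L : κ → Finset (Finset α)}
    {C T : Finset α} (hCT : Disjoint C T) (hK : Function.Injective K) (hKC : ∀ i, K i ⊆ C)
    (hLT : ∀ i, ∀ X ∈ L i, X ⊆ T) (p : Finset α → Prop) [DecidablePred p] :
    #{A ∈ layeredFamily K L | p A} = ∑ i, #{X ∈ L i | p (K i ∪ X)} := by
  have inter_core {i X} (hX : X ∈ L i) : (K i ∪ X) ∩ C = K i := by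
    rw [union_inter_distrib_right, inter_eq_left.2 (hKC i),
      disjoint_iff_inter_eq_empty.1 (hCT.symm.mono_left (hLT i X hX)), union_empty]
  have inter_tail {i X} (hX : X ∈ L i) : (K i ∪ X) ∩ T = X := by
    rw [union_inter_distrib_right, inter_eq_left.2 (hLT i X hX),
      disjoint_iff_inter_eq_empty.1 (hCT.mono_left (hKC i)), empty_union]
  rw [layeredFamily, filter_biUnion, card_biUnion]
  · refine sum_congr rfl fun i _ => ?_
    rw [filter_image, card_image_of_injOn]
    intro X hX Y hY hXY
    rw [← inter_tail (mem_filter.1 hX).1, ← inter_tail (mem_filter.1 hY).1]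
    exact congrArg (· ∩ T) hXY
  · intro i _ j _ hij
    refine disjoint_filter_filter (disjoint_left.2 fun A hAi hAj => hij (hK ?_))
    obtain ⟨X, hX, rfl⟩ := mem_image.1 hAi
    obtain ⟨Y, hY, hYX⟩ := mem_image.1 hAj
    rw [← inter_core hX, ← hYX, inter_core hY]

theorem card_layeredFamily {K : κ → Finset α} {L : κ → Finset (Finset α)} {C T : Finset α}
    (hCT : Disjoint C T) (hK : Function.Injective K) (hKC : ∀ i, K i ⊆ C)
    (hLT : ∀ i, ∀ X ∈ L i, X ⊆ T) : #(layeredFamily K L) = ∑ i, #(L i) := by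
  simpa only [filter_true] using card_filter_layeredFamily hCT hK hKC hLT fun _ => True

theorem unionClosed_layeredFamily {K : κ → Finset ℕ} {L : κ → Finset (Finset ℕ)}
    (h : ∀ i j, ∃ l, K i ∪ K j = K l ∧ ∀ X ∈ L i, ∀ Y ∈ L j, X ∪ Y ∈ L l) :
    UnionClosed (layeredFamily K L) := by
  simp only [UnionClosed, mem_layeredFamily]
  rintro _ ⟨i, X, hX, rfl⟩ _ ⟨j, Y, hY, rfl⟩
  obtain ⟨l, hl, hL⟩ := h i j
  exact ⟨l, X ∪ Y, hL X hX Y hY, by rw [← hl, union_union_union_comm]⟩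

end LayeredFamily

-- `A ↦ insert x A` injects the sets avoiding `x` into the sets containing `x`, and misses `B`.
theorem abundant_of_insert_mem {F : Finset (Finset ℕ)} {x : ℕ} {B : Finset ℕ}
    (hF : ∀ A ∈ F, insert x A ∈ F) (hB : B ∈ F) (hxB : x ∈ B) (hBx : B.erase x ∉ F) :
    Abundant F x := by
  have himage : {A ∈ F | x ∉ A}.image (insert x) ⊂ {A ∈ F | x ∈ A} := by
    refine (ssubset_iff_of_subset ?_).2 ⟨B, mem_filter.2 ⟨hB, hxB⟩, ?_⟩
    · exact image_subset_iff.2 fun A hA =>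
        mem_filter.2 ⟨hF A (mem_filter.1 hA).1, mem_insert_self x A⟩
    · intro h
      obtain ⟨A, hA, rfl⟩ := mem_image.1 h
      obtain ⟨hAF, hxA⟩ := mem_filter.1 hA
      exact hBx (by rwa [erase_insert hxA])
  have hinj : Set.InjOn (insert x) ↑(F.filter (x ∉ ·)) :=
    insert_erase_invOn.2.injOn.mono fun A hA => (mem_filter.1 hA).2
  have hlt := card_lt_card himage
  rw [card_image_of_injOn hinj] at hlt
  have hsplit := card_filter_add_card_filter_not (s := F) (x ∈ ·)
  unfold Abundant
  omega

theorem two_mul_card_filter_mem_powerset_erase_empty {α : Type*} [DecidableEq α] {T : Finset α}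
    {x : α} (hx : x ∈ T) :
    2 * #{X ∈ T.powerset.erase ∅ | x ∈ X} = #(T.powerset.erase ∅) + 1 := by
  have hmem : {X ∈ T.powerset.erase ∅ | x ∈ X} = {X ∈ T.powerset | x ∈ X} := by
    rw [filter_erase, erase_eq_of_notMem (by simp)]
  have hnotMem : {X ∈ T.powerset | x ∉ X} = (T.erase x).powerset := by
    ext X
    simp [subset_erase]
  have hcard : #T.powerset = 2 * #(T.erase x).powerset := by
    rw [card_powerset, card_powerset, ← card_erase_add_one hx, pow_succ']
  have hsplit := card_filter_add_card_filter_not (s := T.powerset) (x ∈ ·)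
  rw [hmem, card_erase_add_one (empty_mem_powerset T)]
  rw [hnotMem] at hsplit
  omega

/-- A nonempty system of union-closed families whose members have at least two elements, such that
every element belongs to fewer than half of the members, counted over the whole system. The bound is
required only at elements of some member, which keeps it decidable. -/
structure IsSparseSystem {ι : Type*} [Fintype ι] (L : ι → Finset (Finset ℕ)) : Prop where
  exists_nonempty : ∃ i, (L i).Nonempty
  unionClosed : ∀ i, UnionClosed (L i)
  two_le_card : ∀ i, ∀ X ∈ L i, 2 ≤ #X
  two_mul_sum_lt : ∀ i, ∀ X ∈ L i, ∀ x ∈ X, 2 * ∑ j, #{Y ∈ L j | x ∈ Y} < ∑ j, #(L j)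

namespace IsSparseSystem

variable {ι : Type*} [Fintype ι] {L : ι → Finset (Finset ℕ)}

theorem nonempty_of_mem (hL : IsSparseSystem L) {i : ι} {X : Finset ℕ} (hX : X ∈ L i) :
    X.Nonempty :=
  card_pos.1 (zero_lt_two.trans_le (hL.two_le_card i X hX))

theorem two_mul_sum_card_filter_mem_lt (hL : IsSparseSystem L) (x : ℕ) :
    2 * ∑ i, #{X ∈ L i | x ∈ X} < ∑ i, #(L i) := by
  by_cases hx : ∃ i, ∃ X ∈ L i, x ∈ X
  · obtain ⟨i, X, hX, hxX⟩ := hx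
    exact hL.two_mul_sum_lt i X hX x hxX
  · push Not at hx
    obtain ⟨i, hi⟩ := hL.exists_nonempty
    rw [sum_eq_zero fun j _ => card_eq_zero.2 (filter_eq_empty_iff.2 (hx j)), mul_zero]
    exact sum_pos' (fun _ _ => Nat.zero_le _) ⟨i, mem_univ i, hi.card_pos⟩

end IsSparseSystem

/-- The bases of `puncturedFamily`: the whole core `C` at `none`, and `C` punctured at `e i` at
`some i`. -/
def puncturedCore {ι : Type*} (C : Finset ℕ) (e : ι → ℕ) : Option ι → Finset ℕ
  | none => C
  | some i => C.erase (e i)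

/-- The tails of `puncturedFamily`: all nonempty subsets of `T` at `none`, and `L i` at
`some i`. -/
def puncturedTails {ι : Type*} (T : Finset ℕ) (L : ι → Finset (Finset ℕ)) :
    Option ι → Finset (Finset ℕ)
  | none => T.powerset.erase ∅
  | some i => L i

/-- The sets `C ∪ X` with `∅ ≠ X ⊆ T`, together with the sets `(C \ {e i}) ∪ X` with `X ∈ L i`. -/
def puncturedFamily {ι : Type*} [Fintype ι] (C T : Finset ℕ) (e : ι → ℕ)
    (L : ι → Finset (Finset ℕ)) : Finset (Finset ℕ) :=
  layeredFamily (puncturedCore C e) (puncturedTails T L)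

section PuncturedFamily

variable {ι : Type*} {C T : Finset ℕ} {e : ι → ℕ} {L : ι → Finset (Finset ℕ)}

theorem puncturedCore_subset : ∀ o : Option ι, puncturedCore C e o ⊆ C
  | none => Subset.rfl
  | some i => erase_subset (e i) C

theorem puncturedCore_injective (he : Function.Injective e) (heC : ∀ i, e i ∈ C) :
    Function.Injective (puncturedCore C e)
  | none, none, _ => rfl
  | none, some i, h => absurd h.symm (erase_ne_self.2 (heC i))
  | some i, none, h => absurd h (erase_ne_self.2 (heC i))
  | some i, some j, h => congrArg some (he (erase_injOn C (heC i) (heC j) h))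

theorem puncturedCore_union_of_ne (he : Function.Injective e) {o o' : Option ι} (h : o ≠ o') :
    puncturedCore C e o ∪ puncturedCore C e o' = C := by
  refine (union_subset (puncturedCore_subset o) (puncturedCore_subset o')).antisymm fun c hc => ?_
  cases o with
  | none => exact mem_union_left _ hc
  | some i => cases o' with
    | none => exact mem_union_right _ hc
    | some j =>
      have hij : e i ≠ e j := he.ne fun hij => h (congrArg some hij)
      by_cases hci : c = e i
      · exact mem_union_right _ (mem_erase.2 ⟨hci ▸ hij, hc⟩)
      · exact mem_union_left _ (mem_erase.2 ⟨hci, hc⟩)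

theorem mem_puncturedTails_none {X : Finset ℕ} :
    X ∈ puncturedTails T L none ↔ X.Nonempty ∧ X ⊆ T := by
  simp only [puncturedTails, mem_erase, mem_powerset, nonempty_iff_ne_empty]

theorem subset_of_mem_puncturedTails (hLT : ∀ i, ∀ X ∈ L i, X ⊆ T) :
    ∀ o, ∀ X ∈ puncturedTails T L o, X ⊆ T
  | none, _, hX => (mem_puncturedTails_none.1 hX).2
  | some i, X, hX => hLT i X hX

variable [Fintype ι]

theorem mem_puncturedFamily {A : Finset ℕ} :
    A ∈ puncturedFamily C T e L ↔
      (∃ X, (X.Nonempty ∧ X ⊆ T) ∧ C ∪ X = A) ∨ ∃ i, ∃ X ∈ L i, C.erase (e i) ∪ X = A := by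
  rw [puncturedFamily, mem_layeredFamily, Option.exists]
  simp only [mem_puncturedTails_none, puncturedCore]
  rfl

theorem core_union_mem_puncturedFamily {X : Finset ℕ} (hX : X.Nonempty) (hXT : X ⊆ T) :
    C ∪ X ∈ puncturedFamily C T e L :=
  mem_puncturedFamily.2 (.inl ⟨X, ⟨hX, hXT⟩, rfl⟩)

theorem IsSparseSystem.nonempty_of_mem_puncturedTails (hL : IsSparseSystem L) :
    ∀ o, ∀ X ∈ puncturedTails T L o, X.Nonempty
  | none, _, hX => (mem_puncturedTails_none.1 hX).1
  | some _, _, hX => hL.nonempty_of_mem hX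

theorem unionClosed_puncturedFamily (he : Function.Injective e) (hLT : ∀ i, ∀ X ∈ L i, X ⊆ T)
    (hL : IsSparseSystem L) : UnionClosed (puncturedFamily C T e L) := by
  refine unionClosed_layeredFamily fun o o' => ?_
  have union_mem_none : ∀ X ∈ puncturedTails T L o, ∀ Y ∈ puncturedTails T L o',
      X ∪ Y ∈ puncturedTails T L none := fun X hX Y hY =>
    mem_puncturedTails_none.2 ⟨(hL.nonempty_of_mem_puncturedTails o X hX).mono subset_union_left,
      union_subset (subset_of_mem_puncturedTails hLT o X hX)
        (subset_of_mem_puncturedTails hLT o' Y hY)⟩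
  obtain rfl | hne := eq_or_ne o o'
  · refine ⟨o, union_self _, ?_⟩
    cases o with
    | none => exact union_mem_none
    | some i => exact hL.unionClosed i
  · exact ⟨none, puncturedCore_union_of_ne he hne, union_mem_none⟩

theorem succ_card_core_le_card_of_mem (hCT : Disjoint C T) (heC : ∀ i, e i ∈ C)
    (hLT : ∀ i, ∀ X ∈ L i, X ⊆ T) (hL : IsSparseSystem L) {A : Finset ℕ}
    (hA : A ∈ puncturedFamily C T e L) : #C + 1 ≤ #A := by
  obtain ⟨X, ⟨hX, hXT⟩, rfl⟩ | ⟨i, X, hX, rfl⟩ := mem_puncturedFamily.1 hA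
  · rw [card_union_of_disjoint (hCT.mono_right hXT)]
    exact Nat.add_le_add_left hX.card_pos _
  · rw [card_union_of_disjoint (hCT.mono (erase_subset _ _) (hLT i X hX)),
      ← card_erase_add_one (heC i), add_assoc]
    exact Nat.add_le_add_left (hL.two_le_card i X hX) _

theorem sup_puncturedFamily (hLT : ∀ i, ∀ X ∈ L i, X ⊆ T) (hT : T.Nonempty) :
    (puncturedFamily C T e L).sup id = C ∪ T := by
  refine le_antisymm (Finset.sup_le fun A hA => ?_)
    (le_sup (f := id) (core_union_mem_puncturedFamily hT Subset.rfl))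
  obtain ⟨X, ⟨-, hXT⟩, rfl⟩ | ⟨i, X, hX, rfl⟩ := mem_puncturedFamily.1 hA
  · exact union_subset_union_right hXT
  · exact union_subset_union (erase_subset _ _) (hLT i X hX)

theorem abundant_puncturedFamily_of_mem_core (hCT : Disjoint C T) (heC : ∀ i, e i ∈ C)
    (hLT : ∀ i, ∀ X ∈ L i, X ⊆ T) (hL : IsSparseSystem L) (hT : T.Nonempty) {c : ℕ} (hc : c ∈ C) :
    Abundant (puncturedFamily C T e L) c := by
  obtain ⟨t, ht⟩ := hT
  have hmem : C ∪ {t} ∈ puncturedFamily C T e L :=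
    core_union_mem_puncturedFamily (singleton_nonempty t) (singleton_subset_iff.2 ht)
  refine abundant_of_insert_mem (fun A hA => ?_) hmem (mem_union_left _ hc) fun h => ?_
  · obtain ⟨X, -, rfl⟩ | ⟨i, X, hX, rfl⟩ := mem_puncturedFamily.1 hA
    · rwa [insert_eq_of_mem (mem_union_left _ hc)]
    · by_cases hci : c = e i
      · rw [← insert_union, hci, insert_erase (heC i)]
        exact core_union_mem_puncturedFamily (hL.nonempty_of_mem hX) (hLT i X hX)
      · rwa [insert_eq_of_mem (mem_union_left _ (mem_erase.2 ⟨hci, hc⟩))]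
  · have hcard := succ_card_core_le_card_of_mem hCT heC hLT hL h
    rw [card_erase_of_mem (mem_union_left _ hc)] at hcard
    have := card_union_le C {t}
    rw [card_singleton] at this
    omega

theorem not_abundant_puncturedFamily_of_mem_tail (hCT : Disjoint C T) (he : Function.Injective e)
    (heC : ∀ i, e i ∈ C) (hLT : ∀ i, ∀ X ∈ L i, X ⊆ T) (hL : IsSparseSystem L) {t : ℕ}
    (ht : t ∈ T) : ¬ Abundant (puncturedFamily C T e L) t := by
  have hK := puncturedCore_injective he heC
  have hT := subset_of_mem_puncturedTails hLT
  have htK (o : Option ι) : t ∉ puncturedCore C e o := fun h =>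
    disjoint_left.1 hCT (puncturedCore_subset o h) ht
  have hnone := two_mul_card_filter_mem_powerset_erase_empty ht
  have hsome := hL.two_mul_sum_card_filter_mem_lt t
  rw [Abundant, puncturedFamily, card_filter_layeredFamily hCT hK puncturedCore_subset hT,
    card_layeredFamily hCT hK puncturedCore_subset hT]
  simp only [mem_union, htK, false_or, Fintype.sum_option, puncturedTails]
  omega

theorem isConstruction_puncturedFamily (hCT : Disjoint C T) (he : Function.Injective e)
    (heC : ∀ i, e i ∈ C) (hLT : ∀ i, ∀ X ∈ L i, X ⊆ T) (hL : IsSparseSystem L) :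
    IsConstruction (puncturedFamily C T e L) #C (#C + 1) (#C + #T) := by
  obtain ⟨i, X, hX⟩ := hL.exists_nonempty
  have hT : T.Nonempty := (hL.nonempty_of_mem hX).mono (hLT i X hX)
  have ⟨t, ht⟩ := hT
  have hmem : C ∪ {t} ∈ puncturedFamily C T e L :=
    core_union_mem_puncturedFamily (singleton_nonempty t) (singleton_subset_iff.2 ht)
  have habundant : {x ∈ C ∪ T | Abundant (puncturedFamily C T e L) x} = C := by
    rw [filter_union,
      filter_true_of_mem fun c => abundant_puncturedFamily_of_mem_core hCT heC hLT hL hT,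
      filter_false_of_mem fun t => not_abundant_puncturedFamily_of_mem_tail hCT he heC hLT hL,
      union_empty]
  refine ⟨⟨_, hmem⟩, unionClosed_puncturedFamily he hLT hL, ?_, ⟨_, hmem, ?_⟩,
    fun A hA => succ_card_core_le_card_of_mem hCT heC hLT hL hA, ?_⟩
  · rw [sup_puncturedFamily hLT hT, habundant]
  · rw [card_union_of_disjoint (hCT.mono_right (singleton_subset_iff.2 ht)), card_singleton]
  · rw [sup_puncturedFamily hLT hT, card_union_of_disjoint hCT]

end PuncturedFamily

theorem IsSparseSystem.exists_isConstruction {q r s t : ℕ} {L : Fin r → Finset (Finset ℕ)}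
    (hL : IsSparseSystem L) (hLq : ∀ i, ∀ X ∈ L i, X ⊆ range q) (hqt : q ≤ t) (hrs : r ≤ s) :
    ∃ F, IsConstruction F s (s + 1) (t + s) := by
  have h := isConstruction_puncturedFamily (C := Ico t (t + s)) (e := fun i : Fin r => t + i)
    (by rw [range_eq_Ico]; exact (Ico_disjoint_Ico_consecutive 0 t (t + s)).symm)
    (fun i j hij => Fin.ext (Nat.add_left_cancel hij))
    (fun i => mem_Ico.2 ⟨Nat.le_add_right t i, by omega⟩)
    (fun i X hX => (hLq i X hX).trans (range_subset_range.2 hqt)) hL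
  rw [Nat.card_Ico, card_range, Nat.add_sub_cancel_left, add_comm s t] at h
  exact ⟨_, h⟩

/-- A sparse system of two families on `{0, …, 6}`. -/
def twoSparseFamilies : Fin 2 → Finset (Finset ℕ) :=
  ![{{0, 1}, {2, 3}, {0, 1, 2, 3}}, {{4, 5}, {4, 5, 6}}]

/-- A sparse system of three families on `{0, …, 5}`. -/
def threeSparseFamilies : Fin 3 → Finset (Finset ℕ) :=
  ![{{0, 1}}, {{2, 3}}, {{4, 5}}]

/-- A sparse system of four families on `{0, …, 4}`. -/
def fourSparseFamilies : Fin 4 → Finset (Finset ℕ) :=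
  ![{{0, 1}, {0, 2}, {1, 2}, {0, 1, 2}}, {{3, 4}}, {{3, 4}}, {{3, 4}}]

theorem isSparseSystem_twoSparseFamilies : IsSparseSystem twoSparseFamilies where
  exists_nonempty := by decide
  unionClosed := by unfold UnionClosed; decide
  two_le_card := by decide
  two_mul_sum_lt := by decide

theorem isSparseSystem_threeSparseFamilies : IsSparseSystem threeSparseFamilies where
  exists_nonempty := by decide
  unionClosed := by unfold UnionClosed; decide
  two_le_card := by decide
  two_mul_sum_lt := by decide

theorem isSparseSystem_fourSparseFamilies : IsSparseSystem fourSparseFamilies where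
  exists_nonempty := by decide
  unionClosed := by unfold UnionClosed; decide
  two_le_card := by decide
  two_mul_sum_lt := by decide

theorem exists_km1_kn_construction (k n : ℕ) (hk : 3 ≤ k) (hkn : k ≤ n - 4)
    (hn : 9 ≤ n) :
    ∃ F : Finset (Finset ℕ), IsConstruction F (k - 1) k n := by
  obtain ⟨s, rfl⟩ : ∃ s, k = s + 1 := ⟨k - 1, by omega⟩
  obtain ⟨t, rfl⟩ : ∃ t, n = t + s := ⟨n - s, by omega⟩
  rw [Nat.add_sub_cancel]
  obtain rfl | rfl | hs : s = 2 ∨ s = 3 ∨ 4 ≤ s := by omega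
  · exact isSparseSystem_twoSparseFamilies.exists_isConstruction (q := 7) (by decide) (by omega)
      le_rfl
  · exact isSparseSystem_threeSparseFamilies.exists_isConstruction (q := 6) (by decide) (by omega)
      le_rfl
  · exact isSparseSystem_fourSparseFamilies.exists_isConstruction (q := 5) (by decide) (by omega)
      hs
end
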